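/- Let b > 0 and c, d be integers with gcd(b,c)=1 and 0 ≤ c < d ≤ b-1. Then Λ_{b,c} and Λ_{b,d} are isomorphic (there exists A ∈ GL(2,ℤ) with ᵀA·[[0,b],[b,2c]]·A = [[0,b],[b,2d]]) if and only if cd ≡ 1 (mod b). -/

import Mathlib

open Matrix

/-- For b > 0, gcd(b,c)=1 and 0 ≤ c < d ≤ b-1, the lattices Λ_{b,c} and Λ_{b,d}
are isomorphic if and only if cd ≡ 1 (mod b). -/
theorem stmt3 (b c d : ℤ) (hb : 0 < b) (hgcd : Int.gcd b c = 1)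
    (hc0 : 0 ≤ c) (hcd : c < d) (hdb : d ≤ b - 1) :
    (∃ A : Matrix (Fin 2) (Fin 2) ℤ, IsUnit A.det ∧
      Aᵀ * !![0, b; b, 2*c] * A = !![0, b; b, 2*d]) ↔ c * d ≡ 1 [ZMOD b] := by
  constructor
  · rintro ⟨A, hdet, hA⟩
    obtain ⟨x, hx⟩ : ∃ x, x = A 0 0 := ⟨_, rfl⟩
    obtain ⟨y, hy⟩ : ∃ y, y = A 0 1 := ⟨_, rfl⟩
    obtain ⟨z, hz⟩ : ∃ z, z = A 1 0 := ⟨_, rfl⟩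
    obtain ⟨w, hw⟩ : ∃ w, w = A 1 1 := ⟨_, rfl⟩
    have h00 := congrFun (congrFun hA 0) 0
    have h01 := congrFun (congrFun hA 0) 1
    have h11 := congrFun (congrFun hA 1) 1
    simp [Matrix.mul_apply, Fin.sum_univ_two, ← hx, ← hy, ← hz, ← hw] at h00 h01 h11
    rw [Matrix.det_fin_two, ← hx, ← hy, ← hz, ← hw] at hdet
    have e1 : z * (b * x + c * z) = 0 := by linarith
    have e3 : w * (b * y + c * w) = d := by linarith
    rcases mul_eq_zero.mp e1 with h | h
    · exfalso
      subst h
      have e2 : x * w = 1 := mul_left_cancel₀ hb.ne' (by linarith)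
      have hw2 : w * w = 1 := by
        rcases Int.isUnit_iff.mp (IsUnit.of_mul_eq_one_right x e2) with h | h <;> simp [h]
      have hdvd : b ∣ d - c := ⟨w * y, by linear_combination (-1) * e3 + c * hw2⟩
      have := Int.le_of_dvd (by linarith) hdvd
      linarith
    · have hbz : b ∣ z := by
        have : b ∣ c * z := ⟨-x, by linarith⟩
        exact Int.dvd_of_dvd_mul_right_of_gcd_one this hgcd
      obtain ⟨k, rfl⟩ := hbz
      have hxk : x = -c * k := mul_left_cancel₀ hb.ne' (by linarith)
      subst hxk
      have hk : IsUnit k := isUnit_of_dvd_unit ⟨-c * w - y * b, by ring⟩ hdet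
      have e2 : k * (b * y + c * w) = 1 := mul_left_cancel₀ hb.ne' (by linarith)
      have hk2 : k * k = 1 := by
        rcases Int.isUnit_iff.mp hk with h | h <;> simp [h]
      have e4 : b * y + c * w = k := by
        linear_combination k * e2 - (b * y + c * w) * hk2
      rw [e4] at e3
      apply Int.ModEq.symm
      rw [Int.modEq_iff_dvd]
      exact ⟨-(k * y), by linear_combination (-c) * e3 + k * e4 + hk2⟩
  · intro h
    obtain ⟨y, hy⟩ := h.dvd
    refine ⟨!![-c, y; b, d], ?_, ?_⟩
    · rw [Matrix.det_fin_two_of, Int.isUnit_iff]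
      right
      linarith
    · ext i j
      fin_cases i <;> fin_cases j <;> simp [Matrix.mul_apply, Fin.sum_univ_two]
      · ring
      · linear_combination (-b) * hy
      · linear_combination (-b) * hy
      · linear_combination (-2 * d) * hy
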